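/- Let φ be holomorphic and injective on the exterior disk Δ = {z ∈ ℂ : |z| > 1}, with Laurent expansion φ(z) = z + φ₀ + ∑_{k≥1} φ_{-k} z^{-k} at infinity, and let n ≥ 1. Then the function r ↦ E_n(r) is nonincreasing on (1, ∞): for all 1 < r ≤ r' one has E_n(r') ≤ E_n(r). -/

import Mathlib

open MeasureTheory Filter

/-- The partition function `Z_n(γ_r)` of the Coulomb gas (at `β = 2`) on the analytic
curve `γ_r`, the image of the unit circle under `φ_r(z) = φ(rz)/r`:
`Z_n(r) = (1/(n! r^{n(n-1)})) ∫_{[−π,π]^n} ∏_{μ<ν} |φ(re^{iθ_μ}) − φ(re^{iθ_ν})|²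
∏_μ |φ'(re^{iθ_μ})| dθ`. -/
noncomputable def Zn (φ : ℂ → ℂ) (n : ℕ) (r : ℝ) : ℝ :=
  (1 / (n.factorial * r ^ (n * (n - 1)))) *
    ∫ θ in Set.pi Set.univ (fun _ : Fin n => Set.Icc (-Real.pi) Real.pi),
      (∏ p ∈ Finset.univ.filter (fun p : Fin n × Fin n => p.1 < p.2),
        ‖φ ((r : ℂ) * Complex.exp (Complex.I * (θ p.1 : ℂ)))
          - φ ((r : ℂ) * Complex.exp (Complex.I * (θ p.2 : ℂ)))‖ ^ 2) *
      ∏ μ, ‖deriv φ ((r : ℂ) * Complex.exp (Complex.I * (θ μ : ℂ)))‖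

/-- `E_n(r) = log(Z_n(r)/(2π)^n)`, the "finite `n` Loewner energy" of `γ_r`. -/
noncomputable def En (φ : ℂ → ℂ) (n : ℕ) (r : ℝ) : ℝ :=
  Real.log (Zn φ n r / (2 * Real.pi) ^ n)

/-! With `w = r⁻¹` and `φ z = z + φ₀ + ψ z⁻¹`, the rescaled integrand of `Zn` is the modulus of a
function of `w` that is holomorphic on the unit disk, including `w = 0`. Rotating `w` amounts to
rotating all the points on the circle simultaneously, so the integral of this modulus depends only
on `‖w‖`. By the Poisson integral formula and Fubini it is also subharmonic in `w`, hence
nondecreasing in `‖w‖`, that is, nonincreasing in `r`. -/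

section HolomorphicFamilies

open Metric Real

lemma poissonKernel_nonneg {c w z : ℂ} (h : ‖w - c‖ ≤ ‖z - c‖) : 0 ≤ poissonKernel c w z := by
  rw [poissonKernel_def]
  have := pow_le_pow_left₀ (norm_nonneg (w - c)) h 2
  exact div_nonneg (sub_nonneg.2 this) (by positivity)

lemma circleAverage_poissonKernel {c w : ℂ} {R : ℝ} (hw : w ∈ ball c R) :
    circleAverage (poissonKernel c w) c R = 1 := by
  simpa [Pi.mul_def] using
    (InnerProductSpace.harmonicOnNhd_const (1 : ℝ)).circleAverage_poissonKernel_smul hw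

variable {E : Type*} [NormedAddCommGroup E]

lemma norm_circleAverage_le [NormedSpace ℝ E] (f : ℂ → E) (c : ℂ) (R : ℝ) :
    ‖circleAverage f c R‖ ≤ circleAverage (fun z => ‖f z‖) c R := by
  rw [circleAverage_def, circleAverage_def, norm_smul, norm_of_nonneg (by positivity), smul_eq_mul]
  gcongr
  exact intervalIntegral.norm_integral_le_integral_norm two_pi_pos.le

lemma continuousOn_poissonKernel_sphere {c w : ℂ} {R : ℝ} (hw : w ∈ ball c R) :
    ContinuousOn (poissonKernel c w) (sphere c |R|) := by
  rw [poissonKernel_eq_re_herglotzRieszKernel]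
  exact Complex.continuous_re.comp_continuousOn (continuousOn_herglotzRieszKernel_sphere hw)

variable [NormedSpace ℂ E] [CompleteSpace E]

lemma norm_le_circleAverage_poissonKernel_mul_norm {f : ℂ → E} {c w : ℂ} {R : ℝ}
    (hf : DiffContOnCl ℂ f (ball c R)) (hw : w ∈ ball c R) :
    ‖f w‖ ≤ circleAverage (fun z => poissonKernel c w z * ‖f z‖) c R := by
  have hR : 0 < R := pos_of_mem_ball hw
  calc ‖f w‖ = ‖circleAverage (poissonKernel c w • f) c R‖ := by
        rw [hf.circleAverage_poissonKernel_smul hw]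
    _ ≤ circleAverage (fun z => ‖(poissonKernel c w • f) z‖) c R := norm_circleAverage_le _ _ _
    _ = circleAverage (fun z => poissonKernel c w z * ‖f z‖) c R := by
        refine circleAverage_congr_sphere fun z hz => ?_
        have hwz : ‖w - c‖ ≤ ‖z - c‖ := by
          rw [abs_of_pos hR] at hz
          exact (mem_ball_iff_norm.1 hw).le.trans_eq (mem_sphere_iff_norm.1 hz).symm
        simp only [Pi.smul_apply', norm_smul, norm_of_nonneg (poissonKernel_nonneg hwz)]

variable {X : Type*} [TopologicalSpace X] [CompactSpace X] [MeasurableSpace X] [BorelSpace X]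
  (μ : Measure X) [IsFiniteMeasure μ]

section CircleAverageSwap

variable {F : Type*} [NormedAddCommGroup F] {f : ℂ → X → F} {c : ℂ} {R : ℝ}

lemma integrable_comp_circleMap (hf : ContinuousOn f.uncurry (sphere c |R| ×ˢ Set.univ)) :
    Integrable (fun p : ℝ × X => f (circleMap c R p.1) p.2)
      ((volume.restrict (Set.uIoc 0 (2 * π))).prod μ) := by
  have continuous_param : Continuous fun p : ℝ × X => f (circleMap c R p.1) p.2 :=
    hf.comp_continuous (f := fun p : ℝ × X => (circleMap c R p.1, p.2)) (by fun_prop)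
      fun p => ⟨circleMap_mem_sphere' c R p.1, trivial⟩
  have integrableOn_rectangle := continuous_param.continuousOn.integrableOn_compact'
    (μ := volume.prod μ) (isCompact_uIcc.prod isCompact_univ)
    (measurableSet_uIcc (a := 0) (b := 2 * π) |>.prod .univ)
  have := integrableOn_rectangle.mono_set (Set.prod_mono_left Set.uIoc_subset_uIcc)
  rwa [IntegrableOn, ← Measure.prod_restrict, Measure.restrict_univ] at this

variable [NormedSpace ℝ F]

lemma integrable_circleAverage (hf : ContinuousOn f.uncurry (sphere c |R| ×ˢ Set.univ)) :
    Integrable (fun x => circleAverage (f · x) c R) μ := by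
  simp only [circleAverage_def, intervalIntegral.integral_of_le two_pi_pos.le,
    ← Set.uIoc_of_le two_pi_pos.le]
  exact (integrable_comp_circleMap μ hf).integral_prod_right.smul _

lemma integral_circleAverage_comm (hf : ContinuousOn f.uncurry (sphere c |R| ×ˢ Set.univ)) :
    ∫ x, circleAverage (f · x) c R ∂μ = circleAverage (fun z => ∫ x, f z x ∂μ) c R := by
  simp only [circleAverage_def]
  rw [integral_smul, intervalIntegral_integral_swap (integrable_comp_circleMap μ hf)]

end CircleAverageSwap

theorem integral_norm_le_circleAverage_poissonKernel_mul {P : ℂ → X → E} {c w : ℂ} {R : ℝ}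
    (hcont : ContinuousOn P.uncurry (sphere c R ×ˢ Set.univ))
    (hdiff : ∀ x, DiffContOnCl ℂ (P · x) (ball c R)) (hw : w ∈ ball c R) :
    ∫ x, ‖P w x‖ ∂μ
      ≤ circleAverage (fun z => poissonKernel c w z * ∫ x, ‖P z x‖ ∂μ) c R := by
  have hcont_mul : ContinuousOn (fun z x => poissonKernel c w z * ‖P z x‖).uncurry
      (sphere c |R| ×ˢ Set.univ) := by
    refine ((continuousOn_poissonKernel_sphere hw).comp continuousOn_fst fun p hp => hp.1).mul ?_
    rw [abs_of_pos (pos_of_mem_ball hw)]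
    exact hcont.norm
  calc ∫ x, ‖P w x‖ ∂μ
      ≤ ∫ x, circleAverage (fun z => poissonKernel c w z * ‖P z x‖) c R ∂μ :=
        integral_mono_of_nonneg (.of_forall fun x => norm_nonneg _)
          (integrable_circleAverage μ hcont_mul)
          (.of_forall fun x => norm_le_circleAverage_poissonKernel_mul_norm (hdiff x) hw)
    _ = circleAverage (fun z => poissonKernel c w z * ∫ x, ‖P z x‖ ∂μ) c R := by
        simp only [integral_circleAverage_comm μ hcont_mul, integral_const_mul]

theorem monotoneOn_integral_norm_of_rotation_invariant {P : ℂ → X → E} {R : ℝ}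
    (hcont : ContinuousOn P.uncurry (ball 0 R ×ˢ Set.univ))
    (hdiff : ∀ x, DifferentiableOn ℂ (P · x) (ball 0 R))
    (hrot : ∀ w ∈ ball 0 R, ∫ x, ‖P w x‖ ∂μ = ∫ x, ‖P ‖w‖ x‖ ∂μ) :
    MonotoneOn (fun t : ℝ => ∫ x, ‖P t x‖ ∂μ) (Set.Ico 0 R) := by
  intro s hs t ht hst
  rcases hst.eq_or_lt with rfl | hst
  · exact le_rfl
  have ht_pos : 0 < t := hs.1.trans_lt hst
  have hs_mem : (s : ℂ) ∈ ball (0 : ℂ) t := by simpa [abs_of_nonneg hs.1] using hst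
  have ball_sub : closedBall (0 : ℂ) t ⊆ ball 0 R := closedBall_subset_ball ht.2
  calc ∫ x, ‖P s x‖ ∂μ
      ≤ circleAverage (fun z => poissonKernel 0 s z * ∫ x, ‖P z x‖ ∂μ) 0 t :=
        integral_norm_le_circleAverage_poissonKernel_mul μ
          (hcont.mono (Set.prod_mono_left (sphere_subset_closedBall.trans ball_sub)))
          (fun x => (hdiff x).diffContOnCl_ball ball_sub) hs_mem
    _ = circleAverage (fun z => (∫ x, ‖P t x‖ ∂μ) • poissonKernel 0 s z) 0 t := by
        refine circleAverage_congr_sphere fun z hz => ?_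
        rw [abs_of_pos ht_pos] at hz
        simp only [smul_eq_mul, hrot z (ball_sub (sphere_subset_closedBall hz)),
          mem_sphere_zero_iff_norm.1 hz, mul_comm]
    _ = ∫ x, ‖P t x‖ ∂μ := by
        rw [circleAverage_fun_smul, circleAverage_poissonKernel hs_mem, smul_eq_mul, mul_one]

end HolomorphicFamilies

lemma two_mul_card_filter_fst_lt_snd (ι : Type*) [Fintype ι] [LinearOrder ι] :
    2 * (Finset.univ.filter fun p : ι × ι => p.1 < p.2).card
      = Fintype.card ι * (Fintype.card ι - 1) := by
  rw [← Finset.univ_product_univ, Finset.card_product_filter_lt, Finset.card_univ,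
    Nat.choose_two_right, Nat.mul_div_cancel' (Nat.even_mul_pred_self _).two_dvd]

lemma setIntegral_pi_Icc_eq_integral_addCircle {ι E : Type*} [Fintype ι]
    [NormedAddCommGroup E] [NormedSpace ℝ E] (T : ℝ) [Fact (0 < T)] (a : ℝ)
    {g : (ι → AddCircle T) → E}
    (hg : AEStronglyMeasurable g) :
    ∫ θ in Set.pi Set.univ fun _ : ι => Set.Icc a (a + T), g (fun i => θ i) = ∫ x, g x := by
  have mk_preserving : MeasurePreserving ((↑) : ℝ → AddCircle T)
      (volume.restrict (Set.Icc a (a + T))) volume := by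
    simpa only [restrict_Ioc_eq_restrict_Icc] using AddCircle.measurePreserving_mk T a
  have pi_preserving := measurePreserving_pi _ _ fun _ : ι => mk_preserving
  rw [← Measure.restrict_pi_pi, ← volume_pi] at pi_preserving
  rw [← integral_map pi_preserving.measurable.aemeasurable (pi_preserving.map_eq.symm ▸ hg),
    pi_preserving.map_eq]
  rfl

open Metric in
lemma differentiableOn_tsum_mul_pow_succ {c : ℕ → ℂ} {R : ℝ}
    (hc : ∀ w ∈ ball (0 : ℂ) R, Summable fun k => ‖c k * w ^ (k + 1)‖) :
    DifferentiableOn ℂ (fun w => ∑' k, c k * w ^ (k + 1)) (ball 0 R) := by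
  intro w hw
  obtain ⟨ρ, hwρ, hρR⟩ := exists_between (mem_ball_zero_iff.1 hw)
  have hρ : 0 < ρ := (norm_nonneg w).trans_lt hwρ
  have differentiable_ball : DifferentiableOn ℂ (fun w => ∑' k, c k * w ^ (k + 1)) (ball 0 ρ) := by
    refine Complex.differentiableOn_tsum_of_summable_norm
      (hc ρ (by simpa [abs_of_pos hρ] using hρR)) (fun k => by fun_prop) isOpen_ball
      fun k z hz => ?_
    have hz : ‖z‖ ≤ ‖(ρ : ℂ)‖ := by
      simpa [abs_of_pos hρ] using (mem_ball_zero_iff.1 hz).le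
    rw [norm_mul, norm_mul, norm_pow, norm_pow]
    gcongr
  exact (differentiable_ball.differentiableAt
    (isOpen_ball.mem_nhds (mem_ball_zero_iff.2 hwρ))).differentiableWithinAt

section CoulombGas

open Metric Real

/-- For `φ z = z + φ₀ + ψ z⁻¹` this is `w (φ (u / w) - φ (v / w))`, a form that stays holomorphic
in `w` at `0`. -/
noncomputable def scaledDiff (ψ : ℂ → ℂ) (w : ℂ) (u v : Circle) : ℂ :=
  u - v + w * (ψ (w / u) - ψ (w / v))

/-- For `φ z = z + φ₀ + ψ z⁻¹` this is `φ' (u / w)`, a form that stays holomorphic in `w`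
at `0`. -/
noncomputable def scaledDeriv (ψ : ℂ → ℂ) (w : ℂ) (u : Circle) : ℂ :=
  1 - (w / u) ^ 2 * deriv ψ (w / u)

variable {ι : Type*} [Fintype ι] [LinearOrder ι]

/-- The holomorphic function of `w` whose modulus at `w = r⁻¹` is, up to a power of `r`, the
integrand of the partition function `Zn` at the configuration `r • u`. -/
noncomputable def gasAmplitude (ψ : ℂ → ℂ) (w : ℂ) (u : ι → Circle) : ℂ :=
  (∏ p : ι × ι with p.1 < p.2, scaledDiff ψ w (u p.1) (u p.2) ^ 2) * ∏ i, scaledDeriv ψ w (u i)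

lemma div_circle_mem_ball {w : ℂ} {R : ℝ} (hw : w ∈ ball 0 R) (u : Circle) :
    w / u ∈ ball 0 R := by
  simpa only [mem_ball_zero_iff, norm_div, Circle.norm_coe, div_one] using hw

section Holomorphy

variable {ψ : ℂ → ℂ} {R : ℝ} (hψ : DifferentiableOn ℂ ψ (ball 0 R))
include hψ

lemma continuousOn_uncurry_gasAmplitude :
    ContinuousOn (gasAmplitude (ι := ι) ψ).uncurry (ball 0 R ×ˢ Set.univ) := by
  have quotient (i : ι) : Continuous fun q : ℂ × (ι → Circle) => q.1 / (q.2 i : ℂ) :=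
    continuous_fst.div (by fun_prop) fun q => Circle.coe_ne_zero _
  have along_quotient {f : ℂ → ℂ} (hf : ContinuousOn f (ball 0 R)) (i : ι) :
      ContinuousOn (fun q : ℂ × (ι → Circle) => f (q.1 / (q.2 i : ℂ))) (ball 0 R ×ˢ Set.univ) :=
    hf.comp (quotient i).continuousOn fun q hq => div_circle_mem_ball hq.1 (q.2 i)
  have along_ψ := along_quotient hψ.continuousOn
  have along_deriv := along_quotient (hψ.deriv isOpen_ball).continuousOn
  refine .mul (continuousOn_finsetProd _ fun p _ => ?_) (continuousOn_finsetProd _ fun i _ => ?_)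
  · have chord : Continuous fun q : ℂ × (ι → Circle) => (q.2 p.1 : ℂ) - q.2 p.2 := by fun_prop
    exact (chord.continuousOn.add
      (continuousOn_fst.mul ((along_ψ p.1).sub (along_ψ p.2)))).pow 2
  · exact continuousOn_const.sub (((quotient i).pow 2).continuousOn.mul (along_deriv i))

lemma differentiableOn_gasAmplitude (u : ι → Circle) :
    DifferentiableOn ℂ (gasAmplitude ψ · u) (ball 0 R) := by
  have along_quotient {f : ℂ → ℂ} (hf : DifferentiableOn ℂ f (ball 0 R)) (i : ι) :
      DifferentiableOn ℂ (fun w => f (w / (u i : ℂ))) (ball 0 R) :=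
    hf.comp (by fun_prop) fun w hw => div_circle_mem_ball hw (u i)
  have along_ψ := along_quotient hψ
  have along_deriv := along_quotient (hψ.deriv isOpen_ball)
  refine .mul (.fun_finsetProd fun p _ => ?_) (.fun_finsetProd fun i _ => ?_)
  · exact ((differentiableOn_const _).add
      (differentiableOn_id.mul ((along_ψ p.1).sub (along_ψ p.2)))).pow 2
  · exact (differentiableOn_const _).sub (.mul (by fun_prop) (along_deriv i))

end Holomorphy

section Rotation

variable (ψ : ℂ → ℂ) (w : ℂ) (t : Circle)

lemma mul_div_mul_circle (u : Circle) : w * t / (u * t : Circle) = w / u := by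
  rw [Circle.coe_mul, mul_div_mul_right _ _ (Circle.coe_ne_zero t)]

lemma scaledDiff_mul (u v : Circle) :
    scaledDiff ψ (w * t) (u * t) (v * t) = scaledDiff ψ w u v * t := by
  simp only [scaledDiff, mul_div_mul_circle]
  rw [Circle.coe_mul, Circle.coe_mul]
  ring

lemma scaledDeriv_mul (u : Circle) :
    scaledDeriv ψ (w * t) (u * t) = scaledDeriv ψ w u := by
  simp only [scaledDeriv, mul_div_mul_circle]

lemma norm_gasAmplitude_mul (u : ι → Circle) :
    ‖gasAmplitude ψ (w * t) fun i => u i * t‖ = ‖gasAmplitude ψ w u‖ := by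
  simp only [gasAmplitude, scaledDiff_mul, scaledDeriv_mul, norm_mul, norm_prod, norm_pow,
    Circle.norm_coe, mul_one]

end Rotation

lemma gasAmplitude_zero_ne_zero (ψ : ℂ → ℂ) {u : ι → Circle} (hu : u.Injective) :
    gasAmplitude ψ 0 u ≠ 0 := by
  have factors_ne_zero : ∀ p ∈ Finset.univ.filter fun p : ι × ι => p.1 < p.2,
      ((u p.1 : ℂ) - u p.2) ^ 2 ≠ 0 := fun p hp =>
    pow_ne_zero 2 (sub_ne_zero.2 (Circle.coe_injective.ne (hu.ne (Finset.mem_filter.1 hp).2.ne)))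
  simpa [gasAmplitude, scaledDiff, scaledDeriv] using Finset.prod_ne_zero_iff.2 factors_ne_zero

local instance fact_two_pi_pos : Fact (0 < 2 * π) := ⟨two_pi_pos⟩

/-- The integral over the torus of the modulus of `gasAmplitude ψ w`; at `w = r⁻¹` it is the
partition function `Zn` up to the factor `1 / n!`. -/
noncomputable def gasMass (ι : Type*) [Fintype ι] [LinearOrder ι] (ψ : ℂ → ℂ) (w : ℂ) : ℝ :=
  ∫ x : ι → AddCircle (2 * π), ‖gasAmplitude ψ w fun i => (x i).toCircle‖

lemma coe_toCircle_coe (θ : ℝ) :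
    (AddCircle.toCircle (θ : AddCircle (2 * π)) : ℂ) = Complex.exp (Complex.I * θ) := by
  rw [AddCircle.toCircle_apply_mk, div_self two_pi_pos.ne', one_mul, Circle.coe_exp, mul_comm]

lemma exists_eq_norm_mul_toCircle (w : ℂ) :
    ∃ t : AddCircle (2 * π), w = ‖w‖ * (t.toCircle : ℂ) :=
  ⟨w.arg, by rw [coe_toCircle_coe, mul_comm Complex.I, Complex.norm_mul_exp_arg_mul_I]⟩

lemma gasMass_eq_gasMass_norm (ψ : ℂ → ℂ) (w : ℂ) : gasMass ι ψ w = gasMass ι ψ ‖w‖ := by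
  obtain ⟨t, ht⟩ := exists_eq_norm_mul_toCircle w
  calc gasMass ι ψ w
      = ∫ x : ι → AddCircle (2 * π), ‖gasAmplitude ψ w fun i => (x i + t).toCircle‖ :=
        (integral_add_right_eq_self
          (fun x : ι → AddCircle (2 * π) => ‖gasAmplitude ψ w fun i => (x i).toCircle‖)
          fun _ => t).symm
    _ = ∫ x : ι → AddCircle (2 * π),
          ‖gasAmplitude ψ (‖w‖ * t.toCircle) fun i => (x i).toCircle * t.toCircle‖ := by
        simp only [AddCircle.toCircle_add, ← ht]
    _ = gasMass ι ψ ‖w‖ := by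
        simp only [norm_gasAmplitude_mul, gasMass]

section Monotonicity

variable {ψ : ℂ → ℂ} {R : ℝ} (hψ : DifferentiableOn ℂ ψ (ball 0 R))
include hψ

lemma continuousOn_uncurry_gasAmplitude_toCircle :
    ContinuousOn (fun w (x : ι → AddCircle (2 * π)) =>
      gasAmplitude ψ w fun i => (x i).toCircle).uncurry (ball 0 R ×ˢ Set.univ) := by
  refine (continuousOn_uncurry_gasAmplitude hψ).comp
    (f := fun q : ℂ × (ι → AddCircle (2 * π)) => (q.1, fun i => (q.2 i).toCircle))
    (Continuous.continuousOn ?_) fun q hq => ⟨hq.1, trivial⟩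
  exact continuous_fst.prodMk
    (continuous_pi fun i => AddCircle.continuous_toCircle.comp (by fun_prop))

lemma continuous_gasAmplitude_toCircle {w : ℂ} (hw : w ∈ ball 0 R) :
    Continuous fun x : ι → AddCircle (2 * π) => gasAmplitude ψ w fun i => (x i).toCircle :=
  (continuousOn_uncurry_gasAmplitude_toCircle hψ).comp_continuous
    (f := fun x : ι → AddCircle (2 * π) => (w, x)) (by fun_prop) fun _ => ⟨hw, trivial⟩

theorem monotoneOn_gasMass : MonotoneOn (fun t : ℝ => gasMass ι ψ t) (Set.Ico 0 R) :=
  monotoneOn_integral_norm_of_rotation_invariant volume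
    (continuousOn_uncurry_gasAmplitude_toCircle hψ)
    (fun _ => differentiableOn_gasAmplitude hψ _) fun w _ => gasMass_eq_gasMass_norm ψ w

lemma gasMass_zero_pos (hR : 0 < R) : 0 < gasMass ι ψ 0 := by
  have : Infinite (Set.Ico 0 (0 + 2 * π)) := Set.Ico.infinite (by linarith [two_pi_pos])
  have : Infinite (AddCircle (2 * π)) :=
    .of_injective _ (AddCircle.equivIco (2 * π) 0).symm.injective
  let x : ι ↪ AddCircle (2 * π) :=
    (Fintype.equivFin ι).toEmbedding.trans (Fin.valEmbedding.trans (Infinite.natEmbedding _))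
  refine (continuous_gasAmplitude_toCircle hψ (mem_ball_self hR)).norm
    |>.integral_pos_of_hasCompactSupport_nonneg_nonzero (.of_compactSpace _)
      (fun _ => norm_nonneg _) (x := x) ?_
  exact norm_ne_zero_iff.2 (gasAmplitude_zero_ne_zero ψ
    ((AddCircle.injective_toCircle two_pi_pos.ne').comp x.injective))

lemma gasMass_pos {t : ℝ} (ht : t ∈ Set.Ico 0 R) : 0 < gasMass ι ψ t := by
  have hR : 0 < R := ht.1.trans_lt ht.2
  have zero_pos : 0 < gasMass ι ψ (0 : ℝ) := by
    simpa only [Complex.ofReal_zero] using gasMass_zero_pos hψ hR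
  exact zero_pos.trans_le (monotoneOn_gasMass hψ ⟨le_rfl, hR⟩ ht ht.1)

end Monotonicity

section ExteriorMap

variable {φ ψ : ℂ → ℂ} {φ₀ : ℂ}

lemma one_lt_norm_circle_div {w : ℂ} (hw : w ∈ ball 0 1) (hw₀ : w ≠ 0) (u : Circle) :
    1 < ‖u / w‖ := by
  rw [norm_div, Circle.norm_coe]
  exact (one_lt_div (norm_pos_iff.2 hw₀)).2 (mem_ball_zero_iff.1 hw)

lemma sub_eq_scaledDiff_div (hφψ : ∀ z, 1 < ‖z‖ → φ z = z + φ₀ + ψ z⁻¹) {w : ℂ}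
    (hw : w ∈ ball 0 1) (hw₀ : w ≠ 0) (u v : Circle) :
    φ (u / w) - φ (v / w) = scaledDiff ψ w u v / w := by
  rw [hφψ _ (one_lt_norm_circle_div hw hw₀ u), hφψ _ (one_lt_norm_circle_div hw hw₀ v),
    inv_div, inv_div, scaledDiff, eq_div_iff hw₀]
  field_simp
  ring

lemma deriv_eq_scaledDeriv (hψ : DifferentiableOn ℂ ψ (ball 0 1))
    (hφψ : ∀ z, 1 < ‖z‖ → φ z = z + φ₀ + ψ z⁻¹) {w : ℂ}
    (hw : w ∈ ball 0 1) (hw₀ : w ≠ 0) (u : Circle) :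
    deriv φ (u / w) = scaledDeriv ψ w u := by
  have hz := one_lt_norm_circle_div hw hw₀ u
  have eventually_eq : φ =ᶠ[nhds (u / w)] fun z => z + φ₀ + ψ z⁻¹ := by
    filter_upwards [(isOpen_lt continuous_const continuous_norm).mem_nhds hz] with z using hφψ z
  have hψ_deriv : HasDerivAt ψ (deriv ψ (w / u)) (u / w : ℂ)⁻¹ := by
    rw [inv_div]
    exact (hψ.differentiableAt
      (isOpen_ball.mem_nhds (div_circle_mem_ball hw u))).hasDerivAt
  have expansion_deriv := ((hasDerivAt_id (u / w : ℂ)).add_const φ₀).add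
    (hψ_deriv.comp _ (hasDerivAt_inv (div_ne_zero (Circle.coe_ne_zero u) hw₀)))
  rw [eventually_eq.deriv_eq, scaledDeriv]
  refine expansion_deriv.deriv.trans ?_
  rw [← inv_pow, inv_div]
  ring

lemma ofReal_inv_mem_ball {r : ℝ} (hr : 1 < r) : ((r⁻¹ : ℝ) : ℂ) ∈ ball 0 1 := by
  rw [mem_ball_zero_iff, Complex.norm_real, norm_inv, norm_of_nonneg (zero_le_one.trans hr.le)]
  exact inv_lt_one_of_one_lt₀ hr

lemma prod_norm_sub_sq_mul_prod_norm_deriv (hψ : DifferentiableOn ℂ ψ (ball 0 1))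
    (hφψ : ∀ z, 1 < ‖z‖ → φ z = z + φ₀ + ψ z⁻¹) {r : ℝ} (hr : 1 < r)
    (u : ι → Circle) :
    (∏ p : ι × ι with p.1 < p.2, ‖φ (r * u p.1) - φ (r * u p.2)‖ ^ 2)
        * ∏ i, ‖deriv φ (r * u i)‖
      = r ^ (Fintype.card ι * (Fintype.card ι - 1)) * ‖gasAmplitude ψ (r⁻¹ : ℝ) u‖ := by
  have hr_pos : 0 < r := zero_lt_one.trans hr
  have hw := ofReal_inv_mem_ball hr
  have hw₀ : ((r⁻¹ : ℝ) : ℂ) ≠ 0 := Complex.ofReal_ne_zero.2 (inv_ne_zero hr_pos.ne')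
  have mul_eq_div (i : ι) : (r : ℂ) * u i = u i / (r⁻¹ : ℝ) := by
    rw [Complex.ofReal_inv, div_inv_eq_mul, mul_comm]
  have norm_sub (i j : ι) :
      ‖φ (r * u i) - φ (r * u j)‖ = r * ‖scaledDiff ψ (r⁻¹ : ℝ) (u i) (u j)‖ := by
    rw [mul_eq_div, mul_eq_div, sub_eq_scaledDiff_div hφψ hw hw₀, norm_div, Complex.norm_real,
      norm_of_nonneg (inv_nonneg.2 hr_pos.le), div_inv_eq_mul, mul_comm]
  have deriv_eq (i : ι) : deriv φ (r * u i) = scaledDeriv ψ (r⁻¹ : ℝ) (u i) := by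
    rw [mul_eq_div, deriv_eq_scaledDeriv hψ hφψ hw hw₀]
  simp only [norm_sub, deriv_eq, mul_pow, Finset.prod_mul_distrib, Finset.prod_const, ← pow_mul,
    two_mul_card_filter_fst_lt_snd, gasAmplitude, norm_mul, norm_prod, norm_pow, mul_assoc]

theorem Zn_eq_gasMass (hψ : DifferentiableOn ℂ ψ (ball 0 1))
    (hφψ : ∀ z, 1 < ‖z‖ → φ z = z + φ₀ + ψ z⁻¹) (n : ℕ) {r : ℝ} (hr : 1 < r) :
    Zn φ n r = 1 / n.factorial * gasMass (Fin n) ψ (r⁻¹ : ℝ) := by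
  have hr_pow : r ^ (n * (n - 1)) ≠ 0 := by positivity
  have norm_continuous :=
    (continuous_gasAmplitude_toCircle (ι := Fin n) hψ (ofReal_inv_mem_ball hr)).norm
  have torus_eq := setIntegral_pi_Icc_eq_integral_addCircle (2 * π) (-π)
    norm_continuous.aestronglyMeasurable
  rw [show -π + 2 * π = π by ring] at torus_eq
  have integrand_eq (θ : Fin n → ℝ) := prod_norm_sub_sq_mul_prod_norm_deriv hψ hφψ hr
    fun i => AddCircle.toCircle (θ i : AddCircle (2 * π))
  simp only [coe_toCircle_coe, Fintype.card_fin] at integrand_eq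
  simp only [Zn, integrand_eq, integral_const_mul, torus_eq, gasMass]
  field_simp

theorem antitoneOn_En (hψ : DifferentiableOn ℂ ψ (ball 0 1))
    (hφψ : ∀ z, 1 < ‖z‖ → φ z = z + φ₀ + ψ z⁻¹) (n : ℕ) :
    AntitoneOn (En φ n) (Set.Ioi 1) := by
  intro r hr r' hr' hrr'
  have inv_mem {s : ℝ} (hs : s ∈ Set.Ioi 1) : s⁻¹ ∈ Set.Ico 0 1 :=
    ⟨inv_nonneg.2 (zero_le_one.trans hs.le), inv_lt_one_of_one_lt₀ hs⟩
  have gasMass_le : gasMass (Fin n) ψ (r'⁻¹ : ℝ) ≤ gasMass (Fin n) ψ (r⁻¹ : ℝ) :=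
    monotoneOn_gasMass hψ (inv_mem hr') (inv_mem hr) (inv_anti₀ (zero_lt_one.trans hr) hrr')
  have outer_pos : 0 < gasMass (Fin n) ψ (r'⁻¹ : ℝ) := gasMass_pos hψ (inv_mem hr')
  rw [En, En, Zn_eq_gasMass hψ hφψ n hr, Zn_eq_gasMass hψ hφψ n hr']
  refine log_le_log (by positivity) ?_
  gcongr

end ExteriorMap

end CoulombGas

theorem stmt13_general (φ : ℂ → ℂ) (φ₀ : ℂ) (c : ℕ → ℂ)
    (hLaurent : ∀ z : ℂ, 1 < ‖z‖ →
      Summable (fun k : ℕ => ‖c k * z ^ (-(k : ℤ) - 1)‖) ∧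
      φ z = z + φ₀ + ∑' k : ℕ, c k * z ^ (-(k : ℤ) - 1))
    (n : ℕ) :
    AntitoneOn (En φ n) (Set.Ioi 1) := by
  have zpow_eq (z : ℂ) (k : ℕ) : z ^ (-(k : ℤ) - 1) = z⁻¹ ^ (k + 1) := by
    rw [← neg_add', zpow_neg, inv_pow]
    norm_cast
  simp only [zpow_eq] at hLaurent
  refine antitoneOn_En (differentiableOn_tsum_mul_pow_succ fun w hw => ?_)
    (fun z hz => (hLaurent z hz).2) n
  rcases eq_or_ne w 0 with rfl | hw₀
  · simp
  · have one_lt_norm_inv : 1 < ‖w⁻¹‖ := by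
      rw [norm_inv]
      exact (one_lt_inv₀ (norm_pos_iff.2 hw₀)).2 (mem_ball_zero_iff.1 hw)
    simpa only [inv_inv] using (hLaurent w⁻¹ one_lt_norm_inv).1

/-- For a univalent `φ` on the exterior disk with hydrodynamic
normalization, `r ↦ E_n(r)` is nonincreasing on `(1, ∞)`. -/
theorem stmt13 (φ : ℂ → ℂ) (φ₀ : ℂ) (c : ℕ → ℂ)
    (hφ : DifferentiableOn ℂ φ {z : ℂ | 1 < ‖z‖})
    (hinj : Set.InjOn φ {z : ℂ | 1 < ‖z‖})
    (hLaurent : ∀ z : ℂ, 1 < ‖z‖ →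
      Summable (fun k : ℕ => ‖c k * z ^ (-(k : ℤ) - 1)‖) ∧
      φ z = z + φ₀ + ∑' k : ℕ, c k * z ^ (-(k : ℤ) - 1))
    (n : ℕ) (hn : 1 ≤ n) :
    ∀ r r' : ℝ, 1 < r → r ≤ r' → En φ n r' ≤ En φ n r :=
  fun _ _ hr hrr => stmt13_general φ φ₀ c hLaurent n hr (hr.trans_le hrr) hrr
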